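/- Let k be a field of characteristic zero, n ≥ 1, and let A = k[x,y]/(x²) (equivalently, the dual numbers over the polynomial ring k[y]). Define the k-bilinear bracket D(u,v) = x·u·(∂ⁿv/∂yⁿ) on A, where ∂/∂y is the derivation of A induced by differentiation in y. Then D satisfies the Loday Jacobi identity D(u,D(v,w)) = D(D(u,v),w) + D(v,D(u,w)) for all u, v, w ∈ A, but D is not skew-symmetric; in particular D is a Loday bracket of differential order n which is not a Lie bracket. -/

import Mathlib

/-- `(δ(x)D)(y) = D(x*y) - x*D(y)`. -/
def delta {A : Type*} [NonUnitalNonAssocRing A] (x : A) (D : A → A) : A → A :=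
  fun y => D (x * y) - x * D y

/-- `D : A → A` is a differential operator of order `≤ n` if
`δ(x₁)⋯δ(x_{n+1}) D = 0` for all `x₁, …, x_{n+1} ∈ A`. -/
def IsDiffOpLE {A : Type*} [NonUnitalNonAssocRing A] : ℕ → (A → A) → Prop
  | 0, D => ∀ x : A, delta x D = 0
  | n + 1, D => ∀ x : A, IsDiffOpLE n (delta x D)

/-- The derivation `∂/∂y` of `A = k[x,y]/(x²)`, realized as the dual numbers
over the polynomial ring `k[y]` (so `x` is `ε` and `y` the polynomial
variable). -/
noncomputable def dY {k : Type*} [CommRing k]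
    (a : DualNumber (Polynomial k)) : DualNumber (Polynomial k) :=
  TrivSqZeroExt.inl (Polynomial.derivative (TrivSqZeroExt.fst a)) +
    TrivSqZeroExt.inr (Polynomial.derivative (TrivSqZeroExt.snd a))

/-- The bracket `D(u,v) = x·u·(∂ⁿv/∂yⁿ)` on `A = k[x,y]/(x²)`. -/
noncomputable def lodayD {k : Type*} [CommRing k] (n : ℕ)
    (u v : DualNumber (Polynomial k)) : DualNumber (Polynomial k) :=
  DualNumber.eps * u * (dY^[n] v)

/-!
Write `ε` for the class of `x`. Since `∂ε/∂y = 0`, multiplication by `ε` commutes with `∂ⁿ/∂yⁿ`, so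
`ε² = 0` kills every iterated bracket and each term of the Jacobi identity is zero.
Skew-symmetry fails because `D(1, yⁿ) = n! ε`, while `D(yⁿ, 1) = 0` for `n ≥ 1`.
-/

section DifferentialOperators

section NonUnitalNonAssocRing

variable {A : Type*} [NonUnitalNonAssocRing A]

theorem delta_zero (x : A) : delta x (0 : A → A) = 0 := by
  ext y
  simp [delta]

theorem delta_id (x : A) : delta x (id : A → A) = 0 := by
  ext y
  simp [delta]

theorem delta_add (x : A) (D E : A → A) : delta x (D + E) = delta x D + delta x E := by
  ext y
  simp only [delta, Pi.add_apply, mul_add]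
  abel

theorem isDiffOpLE_zero (n : ℕ) : IsDiffOpLE n (0 : A → A) := by
  induction n with
  | zero => exact delta_zero
  | succ n ih =>
    intro x
    rwa [delta_zero]

theorem isDiffOpLE_id (n : ℕ) : IsDiffOpLE n (id : A → A) := by
  cases n with
  | zero => exact delta_id
  | succ n =>
    intro x
    rw [delta_id]
    exact isDiffOpLE_zero n

theorem IsDiffOpLE.add {n : ℕ} {D E : A → A} (hD : IsDiffOpLE n D) (hE : IsDiffOpLE n E) :
    IsDiffOpLE n (D + E) := by
  induction n generalizing D E with
  | zero =>
    intro x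
    rw [delta_add, hD x, hE x, add_zero]
  | succ n ih =>
    intro x
    rw [delta_add]
    exact ih (hD x) (hE x)

end NonUnitalNonAssocRing

section NonUnitalCommRing

variable {A : Type*} [NonUnitalCommRing A]

theorem delta_const_mul (x c : A) (D : A → A) :
    delta x (fun y => c * D y) = fun y => c * delta x D y := by
  ext y
  simp only [delta, mul_sub, mul_left_comm]

theorem IsDiffOpLE.const_mul {n : ℕ} {D : A → A} (hD : IsDiffOpLE n D) (c : A) :
    IsDiffOpLE n (fun y => c * D y) := by
  induction n generalizing D with
  | zero =>
    intro x
    ext y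
    simp [delta_const_mul, hD x]
  | succ n ih =>
    intro x
    rw [delta_const_mul]
    exact ih (hD x)

end NonUnitalCommRing

section Derivation

variable {R A : Type*} [CommSemiring R] [CommRing A] [Algebra R A] (d : Derivation R A A)

theorem delta_derivation_comp (x : A) (D : A → A) :
    delta x (d ∘ D) = (fun y => d x * D y) + d ∘ delta x D := by
  ext y
  simp only [delta, Function.comp_apply, Pi.add_apply, map_sub, Derivation.leibniz, smul_eq_mul]
  ring

theorem IsDiffOpLE.derivation_comp {n : ℕ} {D : A → A} (hD : IsDiffOpLE n D) :
    IsDiffOpLE (n + 1) (d ∘ D) := by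
  induction n generalizing D with
  | zero =>
    intro x
    have hcomp : d ∘ delta x D = 0 := by
      ext y
      simp [hD x]
    rw [delta_derivation_comp, hcomp, add_zero]
    exact hD.const_mul (d x)
  | succ n ih =>
    intro x
    rw [delta_derivation_comp]
    exact (hD.const_mul (d x)).add (ih (hD x))

theorem isDiffOpLE_derivation_iterate (n : ℕ) : IsDiffOpLE n d^[n] := by
  induction n with
  | zero => exact isDiffOpLE_id 0
  | succ n ih =>
    rw [Function.iterate_succ']
    exact ih.derivation_comp d

end Derivation

end DifferentialOperators

theorem derivation_iterate_mul_of_apply_eq_zero {R A : Type*} [CommSemiring R] [CommSemiring A]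
    [Algebra R A] (d : Derivation R A A) {a : A} (ha : d a = 0) (n : ℕ) (b : A) :
    d^[n] (a * b) = a * d^[n] b := by
  have hcomm : Function.Commute d (a * ·) := fun b => by simp [ha]
  exact hcomm.iterate_left n b

section DualNumbers

open Polynomial TrivSqZeroExt

variable {k : Type*} [CommRing k]

theorem fst_dY (a : DualNumber k[X]) : (dY a).fst = derivative a.fst := by
  simp only [dY, fst_add, fst_inl, fst_inr, add_zero]

theorem snd_dY (a : DualNumber k[X]) : (dY a).snd = derivative a.snd := by
  simp only [dY, snd_add, snd_inl, snd_inr, zero_add]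

theorem dY_mul (a b : DualNumber k[X]) : dY (a * b) = a * dY b + b * dY a := by
  apply TrivSqZeroExt.ext
  · simp only [fst_dY, fst_add, fst_mul, derivative_mul]
    ring
  · simp only [fst_dY, snd_dY, snd_add, DualNumber.snd_mul, derivative_add, derivative_mul]
    ring

/-- The map `dY` bundled as a `k`-linear derivation, which makes the general results on derivations
applicable to it. -/
noncomputable def dYDerivation (k : Type*) [CommRing k] :
    Derivation k (DualNumber k[X]) (DualNumber k[X]) :=
  Derivation.mk'
    { toFun := dY
      map_add' := fun a b => by ext <;> simp [fst_dY, snd_dY]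
      map_smul' := fun c a => by ext <;> simp [fst_dY, snd_dY] }
    dY_mul

theorem dY_eps : dY (DualNumber.eps : DualNumber k[X]) = 0 := by
  ext <;> simp [fst_dY, snd_dY]

theorem dY_iterate_eps_mul (n : ℕ) (a : DualNumber k[X]) :
    dY^[n] (DualNumber.eps * a) = DualNumber.eps * dY^[n] a :=
  derivation_iterate_mul_of_apply_eq_zero (dYDerivation k) dY_eps n a

theorem dY_iterate_inl (n : ℕ) (p : k[X]) :
    dY^[n] (inl p : DualNumber k[X]) = inl (derivative^[n] p) := by
  have hsemiconj : Function.Semiconj (inl : k[X] → DualNumber k[X]) derivative dY :=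
    fun p => by simp [dY]
  exact (hsemiconj.iterate_right n p).symm

theorem lodayD_lodayD_left (n : ℕ) (u v w : DualNumber k[X]) :
    lodayD n (lodayD n u v) w = 0 := by
  simp only [lodayD, ← mul_assoc, DualNumber.eps_mul_eps, zero_mul]

theorem lodayD_lodayD_right (n : ℕ) (u v w : DualNumber k[X]) :
    lodayD n u (lodayD n v w) = 0 := by
  simp only [lodayD, mul_assoc, dY_iterate_eps_mul]
  rw [mul_left_comm u, ← mul_assoc, DualNumber.eps_mul_eps, zero_mul]

theorem lodayD_jacobi (n : ℕ) (u v w : DualNumber k[X]) :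
    lodayD n u (lodayD n v w) = lodayD n (lodayD n u v) w + lodayD n v (lodayD n u w) := by
  simp only [lodayD_lodayD_left, lodayD_lodayD_right, add_zero]

theorem isDiffOpLE_lodayD_right (n : ℕ) (u : DualNumber k[X]) :
    IsDiffOpLE n (fun v => lodayD n u v) :=
  (isDiffOpLE_derivation_iterate (dYDerivation k) n).const_mul (DualNumber.eps * u)

theorem isDiffOpLE_lodayD_left (m n : ℕ) (v : DualNumber k[X]) :
    IsDiffOpLE m (fun u => lodayD n u v) := by
  have hmul : (fun u => lodayD n u v) = fun u => (DualNumber.eps * dY^[n] v) * id u := by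
    ext1 u
    exact mul_right_comm _ _ _
  rw [hmul]
  exact (isDiffOpLE_id m).const_mul _

theorem lodayD_inl_inl (n : ℕ) (p q : k[X]) :
    lodayD n (inl p) (inl q) = inr (p * derivative^[n] q) := by
  rw [lodayD, dY_iterate_inl]
  ext <;> simp [mul_comm]

theorem lodayD_one_inl_X_pow (n : ℕ) :
    lodayD n (1 : DualNumber k[X]) (inl (X ^ n)) = inr (n.factorial : k[X]) := by
  rw [← inl_one, lodayD_inl_inl, iterate_derivative_X_pow_eq_natCast_mul, Nat.sub_self,
    Nat.descFactorial_self, pow_zero, mul_one, one_mul]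

theorem lodayD_inl_one {n : ℕ} (hn : 1 ≤ n) (p : k[X]) :
    lodayD n (inl p) (1 : DualNumber k[X]) = 0 := by
  rw [← inl_one, lodayD_inl_inl, iterate_derivative_one hn, mul_zero, inr_zero]

theorem lodayD_not_skew {n : ℕ} (hn : 1 ≤ n) (hfactorial : (n.factorial : k) ≠ 0) :
    ¬ ∀ u v : DualNumber k[X], lodayD n u v = -lodayD n v u := by
  intro hskew
  have hinr : (inr (n.factorial : k[X]) : DualNumber k[X]) = 0 := by
    rw [← lodayD_one_inl_X_pow, hskew, lodayD_inl_one hn, neg_zero]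
  have hpoly : (n.factorial : k[X]) = 0 := inr_injective hinr
  rw [← C_eq_natCast, C_eq_zero] at hpoly
  exact hfactorial hpoly

theorem loday_bracket_on_dual_numbers_not_skew_general (n : ℕ) (hn : 1 ≤ n)
    (hfactorial : (n.factorial : k) ≠ 0) :
    (∀ u v w : DualNumber k[X],
        lodayD n u (lodayD n v w) = lodayD n (lodayD n u v) w + lodayD n v (lodayD n u w)) ∧
    (∀ u : DualNumber k[X],
        IsDiffOpLE n (fun v => lodayD n u v) ∧ IsDiffOpLE n (fun v => lodayD n v u)) ∧
    ¬ ∀ u v : DualNumber k[X], lodayD n u v = -lodayD n v u :=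
  ⟨lodayD_jacobi n, fun u => ⟨isDiffOpLE_lodayD_right n u, isDiffOpLE_lodayD_left n n u⟩,
    lodayD_not_skew hn hfactorial⟩

end DualNumbers

/-- **Remark (counterexample with nilpotents).** On `A = k[x,y]/(x²)` the
bracket `D(u,v) = x·u·∂ⁿv/∂yⁿ` satisfies the Loday Jacobi identity and is a
bidifferential operator of order `≤ n` in each argument, yet it is not
skew-symmetric: a differential Loday bracket of order `n` which is not a Lie
bracket. -/
theorem loday_bracket_on_dual_numbers_not_skew
    {k : Type*} [Field k] [CharZero k] (n : ℕ) (hn : 1 ≤ n) :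
    (∀ u v w : DualNumber (Polynomial k),
        lodayD n u (lodayD n v w) =
          lodayD n (lodayD n u v) w + lodayD n v (lodayD n u w)) ∧
    (∀ u : DualNumber (Polynomial k),
        IsDiffOpLE n (fun v => lodayD n u v) ∧ IsDiffOpLE n (fun v => lodayD n v u)) ∧
    ¬ (∀ u v : DualNumber (Polynomial k), lodayD n u v = - lodayD n v u) :=
  loday_bracket_on_dual_numbers_not_skew_general n hn (Nat.cast_ne_zero.mpr n.factorial_ne_zero)
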